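/- Let n ≥ 2, let G be a finite simple graph with vertex set {1, …, n} and edge set E, and let P = (P_1, …, P_n) be real 3×4 matrices such that every P_i is nonzero and there exist indices a ≠ b with P_a and P_b of rank 3 and with distinct centers. For each edge e = {i, j} set F_e = 𝓕(P_i, P_j), and let J_P be the linear map sending a tuple H = (H_1, …, H_n) of real 3×4 matrices to the edge-indexed tuple (H_jᵀ F_e P_i + P_jᵀ F_e H_i + H_iᵀ F_eᵀ P_j + P_iᵀ F_eᵀ H_j)_{e={i,j}∈E}. Then the rank of J_P is at most 11n − 15. -/

import Mathlib

open Matrix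

/-- The fundamental matrix of a camera pair `(P, Q)` of `3 × 4` matrices:
its `(h,k)` entry is `(-1)^(h+k)` times the determinant of the `4 × 4` matrix
obtained by stacking the rows of `P` other than row `k` (in their original order)
on top of the rows of `Q` other than row `h` (in their original order). -/
def fund {K : Type*} [CommRing K] (P Q : Matrix (Fin 3) (Fin 4) K) :
    Matrix (Fin 3) (Fin 3) K :=
  Matrix.of fun h k =>
    (-1 : K) ^ ((h : ℕ) + (k : ℕ)) *
      (Matrix.of fun r c : Fin 4 =>
          if hr : (r : ℕ) < 2 then P (k.succAbove ⟨(r : ℕ), hr⟩) c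
          else Q (h.succAbove ⟨(r : ℕ) - 2, by have := r.isLt; omega⟩) c).det

/-- The edges of a graph on `Fin n`, each represented by its unique ordered pair
`(i, j)` of adjacent vertices with `i < j`. -/
def EdgeIdx {n : ℕ} (G : SimpleGraph (Fin n)) : Type :=
  {p : Fin n × Fin n // G.Adj p.1 p.2 ∧ p.1 < p.2}

/-- The Jacobian, with respect to the camera variables, of the polynomial system
`Φ_G(Q, 𝓕(P)) = (Qⱼᵀ F_e Qᵢ + Qᵢᵀ F_eᵀ Qⱼ)_{e∈E}` evaluated at `Q = P`, where
`F_e = 𝓕(Pᵢ, Pⱼ)` for the edge `e = {i, j}`: it sends a tuple `H` of `3 × 4`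
matrices to the edge-indexed tuple
`(Hⱼᵀ F_e Pᵢ + Pⱼᵀ F_e Hᵢ + Hᵢᵀ F_eᵀ Pⱼ + Pᵢᵀ F_eᵀ Hⱼ)_{e={i,j}∈E}`. -/
def JP {K : Type*} [CommRing K] {n : ℕ} (G : SimpleGraph (Fin n))
    (P : Fin n → Matrix (Fin 3) (Fin 4) K) :
    (Fin n → Matrix (Fin 3) (Fin 4) K) →ₗ[K]
      (EdgeIdx G → Matrix (Fin 4) (Fin 4) K) where
  toFun H := fun e =>
    (H e.1.2)ᵀ * fund (P e.1.1) (P e.1.2) * P e.1.1 +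
      (P e.1.2)ᵀ * fund (P e.1.1) (P e.1.2) * H e.1.1 +
      (H e.1.1)ᵀ * (fund (P e.1.1) (P e.1.2))ᵀ * P e.1.2 +
      (P e.1.1)ᵀ * (fund (P e.1.1) (P e.1.2))ᵀ * H e.1.2
  map_add' H K := by
    funext e
    simp only [Pi.add_apply, Matrix.transpose_add, Matrix.add_mul, Matrix.mul_add]
    abel
  map_smul' c H := by
    funext e
    simp only [Pi.smul_apply, Matrix.transpose_smul, Matrix.smul_mul,
      Matrix.mul_smul, RingHom.id_apply, smul_add]

/-!
With `e` the epipole of `(P, Q)`, the image under `Q` of the center of `P`, the classical formula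
`𝓕(P, Q) P x = Q x × e` shows that `Qᵀ 𝓕(P, Q) P` is skew-symmetric. The epipolar equations are
therefore preserved to first order by the rescalings of the cameras and by the changes of world
coordinates, that is by `Hᵢ = cᵢ Pᵢ - Pᵢ M`. These directions form a space of dimension `n + 16`
minus that of the stabilizer. If `(c, M)` stabilizes `P`, then `M - cᵢ` maps into `ker Pᵢ`; two
kernels that meet trivially without spanning the space force `M` to be a scalar matrix, so the
stabilizer is a line and the rank is at most `12 n - (n + 15)`.
-/

section LinearAlgebra

variable {R K V l m n p : Type*} [CommRing R] [Field K] [AddCommGroup V] [Module K V] [Fintype p]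

theorem sum_mul_det_submatrix_succAbove_eq_zero {k : ℕ} (A : Matrix (Fin (k + 1)) (Fin k) R)
    (j : Fin k) :
    ∑ i : Fin (k + 1), (-1) ^ (i : ℕ) * A i j * (A.submatrix i.succAbove id).det = 0 := by
  let B : Matrix (Fin (k + 1)) (Fin (k + 1)) R := of fun i ↦ Fin.cons (A i j) (A i)
  have hB : B.det = 0 := det_zero_of_column_eq (Fin.succ_ne_zero j).symm fun i ↦ by simp [B]
  rw [← hB, det_succ_column_zero]
  rfl

theorem disjoint_of_finrank_eq_one {U W : Submodule K V} (hU : Module.finrank K U = 1)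
    (hW : Module.finrank K W = 1) (hUW : U ≠ W) : Disjoint U W :=
  (Submodule.isAtom_iff_finrank_eq_one.mpr hU).disjoint_of_ne
    (Submodule.isAtom_iff_finrank_eq_one.mpr hW) hUW

theorem not_codisjoint_of_finrank_add_lt {U W : Submodule K V}
    (h : Module.finrank K U + Module.finrank K W < Module.finrank K V) : ¬ Codisjoint U W := by
  intro hUW
  have : FiniteDimensional K V := .of_finrank_pos (Nat.zero_lt_of_lt h)
  have hle := Submodule.finrank_add_le_finrank_add_finrank U W
  rw [hUW.eq_top, finrank_top] at hle
  omega

theorem finrank_ker_mulVecLin (A : Matrix m p K) :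
    Module.finrank K (LinearMap.ker A.mulVecLin) = Fintype.card p - A.rank := by
  have h := LinearMap.finrank_range_add_finrank_ker A.mulVecLin
  rw [← rank, Module.finrank_fintype_fun_eq_card] at h
  omega

theorem eq_zero_of_mul_eq_zero_of_disjoint_ker {A : Matrix l p R} {B : Matrix m p R}
    {N : Matrix p n R}
    (hAB : Disjoint (LinearMap.ker A.mulVecLin) (LinearMap.ker B.mulVecLin))
    (hA : A * N = 0) (hB : B * N = 0) : N = 0 :=
  ext_col fun j ↦ Submodule.disjoint_def.mp hAB (N.col j)
    (congrArg (col · j) hA) (congrArg (col · j) hB)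

theorem eq_of_mul_eq_smul_of_not_codisjoint_ker {A : Matrix l p K} {B : Matrix m p K}
    {M : Matrix p p K} {a b : K}
    (hAB : ¬ Codisjoint (LinearMap.ker A.mulVecLin) (LinearMap.ker B.mulVecLin))
    (hA : A * M = a • A) (hB : B * M = b • B) : a = b := by
  contrapose! hAB with hab
  refine codisjoint_iff_le_sup.mpr fun x _ ↦ ?_
  have hxA : M *ᵥ x - a • x ∈ LinearMap.ker A.mulVecLin := by
    simp [mulVec_sub, mulVec_smul, hA, smul_mulVec]
  have hxB : M *ᵥ x - b • x ∈ LinearMap.ker B.mulVecLin := by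
    simp [mulVec_sub, mulVec_smul, hB, smul_mulVec]
  have hx : (b - a) • x = (M *ᵥ x - a • x) - (M *ᵥ x - b • x) := by module
  refine (Submodule.smul_mem_iff _ (sub_ne_zero.mpr hab.symm)).mp ?_
  rw [hx]
  exact Submodule.sub_mem _ (Submodule.mem_sup_left hxA) (Submodule.mem_sup_right hxB)

end LinearAlgebra

section FundamentalMatrix

variable {R : Type*} [CommRing R]

theorem sum_mul_det_succAbove_rows (P : Matrix (Fin 3) (Fin 4) R) (q r : Fin 4 → R) (j : Fin 4) :
    ∑ k : Fin 3, (-1) ^ (k : ℕ) * P k j *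
        det (of ![P (k.succAbove 0), P (k.succAbove 1), q, r]) =
      q j * det (of ![P 0, P 1, P 2, r]) - r j * det (of ![P 0, P 1, P 2, q]) := by
  let v : Fin 5 → Fin 4 → R := ![P 0, P 1, P 2, q, r]
  have hv (i : Fin 5) : (of v).submatrix i.succAbove id =
      of ![v (i.succAbove 0), v (i.succAbove 1), v (i.succAbove 2), v (i.succAbove 3)] := by
    ext s
    fin_cases s <;> rfl
  have hsum : ∑ i : Fin 5, (-1) ^ (i : ℕ) * v i j * ((of v).submatrix i.succAbove id).det = 0 :=
    sum_mul_det_submatrix_succAbove_eq_zero (of v) j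
  have hfive : P 0 j * det (of ![P 1, P 2, q, r]) - P 1 j * det (of ![P 0, P 2, q, r]) +
      P 2 j * det (of ![P 0, P 1, q, r]) - q j * det (of ![P 0, P 1, P 2, r]) +
      r j * det (of ![P 0, P 1, P 2, q]) = 0 := by
    simpa [hv, v, Fin.sum_univ_five, Fin.succAbove, pow_succ, ← sub_eq_add_neg] using hsum
  have hthree : ∑ k : Fin 3, (-1) ^ (k : ℕ) * P k j *
        det (of ![P (k.succAbove 0), P (k.succAbove 1), q, r]) =
      P 0 j * det (of ![P 1, P 2, q, r]) - P 1 j * det (of ![P 0, P 2, q, r]) +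
        P 2 j * det (of ![P 0, P 1, q, r]) := by
    simp [Fin.sum_univ_three, Fin.succAbove, ← sub_eq_add_neg]
  linear_combination hthree + hfive

theorem fund_apply_eq_det (P Q : Matrix (Fin 3) (Fin 4) R) (h k : Fin 3) :
    fund P Q h k = (-1) ^ ((h : ℕ) + (k : ℕ)) *
      det (of ![P (k.succAbove 0), P (k.succAbove 1), Q (h.succAbove 0), Q (h.succAbove 1)]) := by
  rw [fund, of_apply]
  congr 2
  ext r
  fin_cases r <;> rfl

/-- The epipole of the camera pair `(P, Q)`: the image under `Q` of the center of `P`, each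
coordinate being computed by Cramer's rule. It is zero when `P` has rank less than `3`. -/
def epipole (P Q : Matrix (Fin 3) (Fin 4) R) : Fin 3 → R :=
  fun h ↦ det (of ![P 0, P 1, P 2, Q h])

theorem col_fund_mul (P Q : Matrix (Fin 3) (Fin 4) R) (j : Fin 4) :
    (fund P Q * P).col j = Q.col j ⨯₃ epipole P Q := by
  ext h
  have hentry : (fund P Q * P).col j h = (-1) ^ (h : ℕ) *
      (Q (h.succAbove 0) j * epipole P Q (h.succAbove 1) -
        Q (h.succAbove 1) j * epipole P Q (h.succAbove 0)) := by
    simp only [epipole, ← sum_mul_det_succAbove_rows, Finset.mul_sum, col_apply, mul_apply,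
      fund_apply_eq_det]
    exact Finset.sum_congr rfl fun k _ ↦ by ring
  rw [hentry]
  fin_cases h <;> simp [cross_apply, Fin.succAbove]

theorem transpose_transpose_mul_fund_mul (P Q : Matrix (Fin 3) (Fin 4) R) :
    (Qᵀ * fund P Q * P)ᵀ = -(Qᵀ * fund P Q * P) := by
  have hentry (i j : Fin 4) : (Qᵀ * fund P Q * P) i j = Q.col i ⬝ᵥ Q.col j ⨯₃ epipole P Q := by
    rw [Matrix.mul_assoc, ← col_fund_mul]
    rfl
  ext i j
  rw [transpose_apply, neg_apply, hentry, hentry, triple_product_permutation, ← cross_anticomm,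
    dotProduct_neg]

end FundamentalMatrix

section Gauge

variable {R ι m p : Type*} [CommRing R] [Fintype p]

/-- The differential at the identity of the action `(λ, g) ↦ (λᵢ Pᵢ g⁻¹)ᵢ` of rescalings and
changes of world coordinates on a tuple of matrices `P`. -/
def infinitesimalGauge (P : ι → Matrix m p R) :
    (ι → R) × Matrix p p R →ₗ[R] ι → Matrix m p R where
  toFun x i := x.1 i • P i - P i * x.2
  map_add' x y := by
    ext1 i
    simp only [Prod.fst_add, Prod.snd_add, Pi.add_apply, add_smul, Matrix.mul_add]
    abel
  map_smul' a x := by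
    ext1 i
    simp [mul_smul, smul_sub]

theorem infinitesimalGauge_apply (P : ι → Matrix m p R) (c : ι → R) (M : Matrix p p R) (i : ι) :
    infinitesimalGauge P (c, M) i = c i • P i - P i * M :=
  rfl

theorem JP_apply_eq_add_transpose {n : ℕ} (G : SimpleGraph (Fin n))
    (P H : Fin n → Matrix (Fin 3) (Fin 4) R) (e : EdgeIdx G) :
    JP G P H e =
      ((H e.1.2)ᵀ * fund (P e.1.1) (P e.1.2) * P e.1.1 +
        (P e.1.2)ᵀ * fund (P e.1.1) (P e.1.2) * H e.1.1) +
      ((H e.1.2)ᵀ * fund (P e.1.1) (P e.1.2) * P e.1.1 +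
        (P e.1.2)ᵀ * fund (P e.1.1) (P e.1.2) * H e.1.1)ᵀ := by
  simp only [JP, LinearMap.coe_mk, AddHom.coe_mk, transpose_add, transpose_mul,
    transpose_transpose, Matrix.mul_assoc]
  abel

theorem range_infinitesimalGauge_le_ker_JP {n : ℕ} (G : SimpleGraph (Fin n))
    (P : Fin n → Matrix (Fin 3) (Fin 4) R) :
    LinearMap.range (infinitesimalGauge P) ≤ LinearMap.ker (JP G P) := by
  rintro _ ⟨⟨c, M⟩, rfl⟩
  refine LinearMap.mem_ker.mpr (funext fun e ↦ ?_)
  set F := fund (P e.1.1) (P e.1.2) with hF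
  set S := (P e.1.2)ᵀ * F * P e.1.1 with hS
  have hskew : Sᵀ = -S := transpose_transpose_mul_fund_mul _ _
  have hvar : (infinitesimalGauge P (c, M) e.1.2)ᵀ * F * P e.1.1 +
      (P e.1.2)ᵀ * F * infinitesimalGauge P (c, M) e.1.1 =
      (c e.1.1 + c e.1.2) • S - (Mᵀ * S + S * M) := by
    simp only [infinitesimalGauge_apply, hS, transpose_sub, transpose_smul, transpose_mul,
      Matrix.sub_mul, Matrix.mul_sub, Matrix.smul_mul, Matrix.mul_smul, Matrix.mul_assoc, add_smul]
    abel
  rw [JP_apply_eq_add_transpose, ← hF, hvar]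
  simp only [transpose_sub, transpose_smul, transpose_add, transpose_mul, transpose_transpose,
    hskew, Matrix.mul_neg, Matrix.neg_mul, smul_neg, Pi.zero_apply]
  abel

end Gauge

section Stabilizer

variable {K ι m p : Type*} [Field K] [Fintype p]

theorem ker_infinitesimalGauge [DecidableEq p] {P : ι → Matrix m p K} (hP : ∀ i, P i ≠ 0) {a b : ι}
    (hdisj : Disjoint (LinearMap.ker (P a).mulVecLin) (LinearMap.ker (P b).mulVecLin))
    (hcodisj : ¬ Codisjoint (LinearMap.ker (P a).mulVecLin) (LinearMap.ker (P b).mulVecLin)) :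
    LinearMap.ker (infinitesimalGauge P) = Submodule.span K {(1, 1)} := by
  refine le_antisymm ?_ ?_
  · rintro ⟨c, M⟩ hcM
    have hM (i : ι) : P i * M = c i • P i := (sub_eq_zero.mp (congrFun hcM i)).symm
    have hab : c a = c b := eq_of_mul_eq_smul_of_not_codisjoint_ker hcodisj (hM a) (hM b)
    have hscalar : M - c a • 1 = 0 := eq_zero_of_mul_eq_zero_of_disjoint_ker hdisj
      (by simp [Matrix.mul_sub, hM]) (by simp [Matrix.mul_sub, hM, hab])
    have hMa : M = c a • 1 := sub_eq_zero.mp hscalar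
    have hc (i : ι) : c a = c i := smul_left_injective K (hP i) <| by simp [← hM i, hMa]
    refine Submodule.mem_span_singleton.mpr ⟨c a, ?_⟩
    ext1
    · ext i
      simp [hc i]
    · simp [hMa]
  · rw [Submodule.span_singleton_le_iff_mem, LinearMap.mem_ker]
    ext1 i
    simp [infinitesimalGauge_apply]

theorem finrank_range_infinitesimalGauge_add_one [Fintype ι] {P : ι → Matrix m p K}
    (hP : ∀ i, P i ≠ 0) {a b : ι}
    (hdisj : Disjoint (LinearMap.ker (P a).mulVecLin) (LinearMap.ker (P b).mulVecLin))
    (hcodisj : ¬ Codisjoint (LinearMap.ker (P a).mulVecLin) (LinearMap.ker (P b).mulVecLin)) :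
    Module.finrank K (LinearMap.range (infinitesimalGauge P)) + 1 =
      Fintype.card ι + Fintype.card p ^ 2 := by
  classical
  have hne : ((1, 1) : (ι → K) × Matrix p p K) ≠ 0 := fun h ↦
    one_ne_zero (congrFun (congrArg Prod.fst h) a)
  have h := LinearMap.finrank_range_add_finrank_ker (infinitesimalGauge P)
  rw [ker_infinitesimalGauge hP hdisj hcodisj, finrank_span_singleton hne] at h
  simpa [Module.finrank_matrix, sq] using h

end Stabilizer

theorem rank_JP_le_general {K : Type*} [Field K] {n : ℕ} (G : SimpleGraph (Fin n))
    {P : Fin n → Matrix (Fin 3) (Fin 4) K} (hP : ∀ i, P i ≠ 0) {a b : Fin n}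
    (hdisj : Disjoint (LinearMap.ker (P a).mulVecLin) (LinearMap.ker (P b).mulVecLin))
    (hcodisj : ¬ Codisjoint (LinearMap.ker (P a).mulVecLin) (LinearMap.ker (P b).mulVecLin)) :
    LinearMap.rank (JP G P) ≤ (11 * n - 15 : ℕ) := by
  have hgauge : Module.finrank K (LinearMap.range (infinitesimalGauge P)) + 1 = n + 4 ^ 2 := by
    simpa using finrank_range_infinitesimalGauge_add_one hP hdisj hcodisj
  have hker := Submodule.finrank_mono (range_infinitesimalGauge_le_ker_JP G P)
  have hJP : Module.finrank K (LinearMap.range (JP G P)) +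
      Module.finrank K (LinearMap.ker (JP G P)) = n * 12 := by
    simpa [Module.finrank_matrix, Module.finrank_pi_fintype] using
      LinearMap.finrank_range_add_finrank_ker (JP G P)
  rw [LinearMap.rank, ← Module.finrank_eq_rank, Nat.cast_le]
  omega

/-- if every camera of the configuration `P` is nonzero and at least
two of them are rank-3 cameras with distinct centers, then the Jacobian `J_P` of
the epipolar system with respect to the cameras has rank at most `11n − 15`. -/
theorem rank_JP_le {n : ℕ} (hn : 2 ≤ n) (G : SimpleGraph (Fin n))
    (P : Fin n → Matrix (Fin 3) (Fin 4) ℝ)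
    (hP : ∀ i, P i ≠ 0)
    (hab : ∃ a b : Fin n, a ≠ b ∧ (P a).rank = 3 ∧ (P b).rank = 3 ∧
      LinearMap.ker (P a).mulVecLin ≠ LinearMap.ker (P b).mulVecLin) :
    LinearMap.rank (JP G P) ≤ (11 * n - 15 : ℕ) := by
  obtain ⟨a, b, -, ha, hb, hne⟩ := hab
  exact rank_JP_le_general G hP
    (disjoint_of_finrank_eq_one (by simp [finrank_ker_mulVecLin, ha])
      (by simp [finrank_ker_mulVecLin, hb]) hne)
    (not_codisjoint_of_finrank_add_lt (by simp [finrank_ker_mulVecLin, ha, hb]))
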